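/- Let R = R(A, α, u − α(u), 1) be a conformal ambiskew polynomial ring with u a central element of A and A a domain such that the skew Laurent polynomial ring A[y^{±1}; α] is simple and its centre equals K. Let λ ∈ K and let z = xy − u be the Casimir element. Then (z − λ)R is a maximal two-sided ideal of R if and only if (u + λ)A + α^m(u + λ)A = A for all m ≥ 1. -/

import Mathlib

/-!
Put `v = u + λ`, so that `z - λ = xy - v`; modulo `M = (z - λ)R` one has `xy ≡ v` and
`yx ≡ α(v)`, and `R / M` is the generalized Weyl algebra of `v`. By the universal property
`IsAmbiskew.exists_lift`, representations of `R` are obtained by exhibiting solutions of the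
defining relations; two of them carry the proof.

* There is a homomorphism `φ : R → A[y^{±1}; α]` with `x ↦ v y⁻¹`, `y ↦ y`, killing `M`; its
  kernel is exactly `M` when `v ≠ 0` (`mem_of_map_eq_zero`). If an ideal `T` is strictly larger
  than `M`, then `⋃ y⁻ⁱ φ(T) y⁻ʲ` is a nonzero ideal of the simple ring `A[y^{±1}; α]`, so some
  power of `y` lies in `T` (`exists_map_eq_pow`). If `v` and `αᵐ(v)` are comaximal for all
  `m ≥ 1`, the exponent can be lowered step by step until `1 ∈ T` (`IsAmbiskew.one_mem`).

* For `m ≥ 1` let `Q = A / (v, αᵐ(v))`. The module `Q ^ m`, with `a` acting on the `k`-th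
  coordinate as `αᵏ(a)`, `y` lowering and `x` raising the index, is an `R`-module killed by `M`
  and by `yᵐ` (`rep_rel`, `repX_mul_repY`, `repY_pow`). As `yᵐ ∉ M`, its annihilator strictly
  contains `M`; maximality of `M` makes it all of `R`, whence `Q = 0`.
-/


noncomputable section

/-- The "monomial" of degree `i` in a generalized Weyl algebra: `Y^i` for `i ≥ 0`
and `X^(-i)` for `i < 0`. -/
def gwaMon {W : Type*} [Monoid W] (X Y : W) : ℤ → W :=
  fun i => if 0 ≤ i then Y ^ i.toNat else X ^ (-i).toNat

/-- `W` is a generalized Weyl algebra `W(A, α, u)` with respect to the embedding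
`ι : A →+* W` and the elements `X, Y`: the defining relations hold and `W` is free as
a left `A`-module with basis `{X^i : i ≥ 1} ∪ {1} ∪ {Y^i : i ≥ 1}`. -/
structure IsGWA {A W : Type*} [Ring A] [Ring W]
    (α : A ≃+* A) (u : A) (ι : A →+* W) (X Y : W) : Prop where
  central : ∀ a : A, u * a = a * u
  YX : Y * X = ι (α u)
  XY : X * Y = ι u
  Ya : ∀ a : A, Y * ι a = ι (α a) * Y
  Xa : ∀ a : A, X * ι a = ι (α.symm a) * X
  free : Function.Bijective
    (fun f : ℤ →₀ A => f.sum fun i a => ι a * gwaMon X Y i)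

/-- `R` is the conformal ambiskew polynomial ring `R(A, α, u − α(u), 1)` with respect to
the embedding `ι : A →ₐ[K] R` and the elements `x, y`: the defining relations hold and
`R` is free as a left `A`-module with basis `{yⁱxʲ : i, j ≥ 0}`. -/
structure IsAmbiskew {K A R : Type*} [Field K] [Ring A] [Algebra K A] [Ring R] [Algebra K R]
    (α : A ≃ₐ[K] A) (u : A) (ι : A →ₐ[K] R) (x y : R) : Prop where
  ucentral : ∀ a : A, u * a = a * u
  ya : ∀ a : A, y * ι a = ι (α a) * y
  xa : ∀ a : A, x * ι a = ι (α.symm a) * x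
  xy : x * y = y * x + ι (u - α u)
  free : Function.Bijective
    (fun f : ℕ × ℕ →₀ A => f.sum fun p a => ι a * (y ^ p.1 * x ^ p.2))

/-- `S` is the skew Laurent polynomial ring `A[y^{±1}; α]` with respect to the embedding
`ι : A →ₐ[K] S` and the invertible element `Y`: `Y·a = α(a)·Y` and `S` is free as a left
`A`-module with basis `{Yⁱ : i ∈ ℤ}`. -/
structure IsSkewLaurent {K A S : Type*} [Field K] [Ring A] [Algebra K A] [Ring S] [Algebra K S]
    (α : A ≃ₐ[K] A) (ι : A →ₐ[K] S) (Y : Sˣ) : Prop where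
  comm : ∀ a : A, (Y : S) * ι a = ι (α a) * (Y : S)
  free : Function.Bijective
    (fun f : ℤ →₀ A => f.sum fun i a => ι a * ((Y ^ i : Sˣ) : S))

/-- `φ : R →+* C` exhibits `C` as the localization of `R` at the multiplicative set `Z`
of central elements: each element of `Z` is central and becomes a unit, every element of
`C` is a fraction, and the kernel of `φ` is the set of elements annihilated by `Z`. -/
structure IsCentralLocalization {R C : Type*} [Ring R] [Ring C] (Z : Set R) (φ : R →+* C) : Prop where
  central : ∀ s ∈ Z, ∀ r : R, s * r = r * s
  isUnit : ∀ s ∈ Z, IsUnit (φ s)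
  surj : ∀ c : C, ∃ r : R, ∃ s ∈ Z, c * φ s = φ r
  ker : ∀ r : R, φ r = 0 ↔ ∃ s ∈ Z, r * s = 0

/-- A two-sided ideal `P` is prime: it is proper and whenever the product of two two-sided
ideals lies in `P`, one of them lies in `P`. -/
def IsPrimeTwoSided {C : Type*} [Ring C] (P : TwoSidedIdeal C) : Prop :=
  P ≠ ⊤ ∧ ∀ I J : TwoSidedIdeal C, (∀ a ∈ I, ∀ b ∈ J, a * b ∈ P) → I ≤ P ∨ J ≤ P

/-- A two-sided ideal `M` is maximal: proper and maximal among proper two-sided ideals. -/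
def IsMaximalTwoSided {C : Type*} [Ring C] (M : TwoSidedIdeal C) : Prop :=
  M ≠ ⊤ ∧ ∀ T : TwoSidedIdeal C, M < T → T = ⊤

/-- Evaluation of a (commutative) multivariate polynomial over `K` at a family of
(pairwise commuting, central) elements of a possibly noncommutative `K`-algebra. -/
def mvEval {K A : Type*} [CommSemiring K] [Ring A] [Algebra K A] {n : ℕ}
    (v : Fin n → A) (p : MvPolynomial (Fin n) K) : A :=
  p.support.sum fun d => algebraMap K A (MvPolynomial.coeff d p) *
    ((List.finRange n).map fun i => v i ^ d i).prod

/-- The components of the graded ideal `J(I)` of a generalized Weyl algebra: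
`I_i = I_{-i} = A` for `i ≥ m`, `I_i = ∩_{ℓ=0}^{m−1−i} α^{−ℓ}(I)` for `0 ≤ i ≤ m−1`, and
`I_{−i} = ∩_{ℓ=i}^{m−1} α^{−ℓ}(I)` for `0 ≤ i ≤ m−1`. -/
def Jcomp {A : Type*} [Ring A] (α : A ≃+* A) (I : Set A) (m : ℕ) : ℤ → Set A :=
  fun d => if m ≤ d.natAbs then Set.univ
    else if 0 ≤ d then ⋂ ℓ ∈ Finset.range (m - d.natAbs), (⇑α.symm)^[ℓ] '' I
    else ⋂ ℓ ∈ Finset.Icc d.natAbs (m - 1), (⇑α.symm)^[ℓ] '' I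

/-- The subset of a generalized Weyl algebra consisting of all elements whose (unique)
graded components of each degree `d` have coefficients in the prescribed set `comp d`. -/
def gwaGradedSet {A W : Type*} [Ring A] [Ring W] (ι : A →+* W) (X Y : W)
    (comp : ℤ → Set A) : Set W :=
  {w | ∃ f : ℤ →₀ A, (∀ d, f d ∈ comp d) ∧ w = f.sum fun d a => ι a * gwaMon X Y d}

/-- The set `Au + Aα^m(u)` in `A`. -/
def genSet2 {A : Type*} [Ring A] (x y : A) : Set A :=
  {a : A | ∃ b c : A, a = b * x + c * y}

/-- The product of two sets in a ring, closed under finite sums: for two-sided ideals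
this is the usual ideal product. -/
def setMulSum {A : Type*} [Ring A] (S T : Set A) : Set A :=
  {x | ∃ (n : ℕ) (f g : Fin n → A), (∀ i, f i ∈ S ∧ g i ∈ T) ∧ x = ∑ i, f i * g i}

/-- The (right-nested) product of a list of sets in a ring; the empty product is `A`. -/
def listProdSet {A : Type*} [Ring A] (l : List (Set A)) : Set A :=
  l.foldr setMulSum Set.univ

/-- The element `d_i = α(u)·α²(u)⋯αⁱ(u)`. -/
def dElt {A : Type*} [Ring A] (α : A ≃+* A) (u : A) (i : ℕ) : A :=
  ((List.range i).map fun s => (⇑α)^[s + 1] u).prod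

/-- The element `e_i = α^{−i}(d_i) = u·α^{−1}(u)⋯α^{1−i}(u)`. -/
def eElt {A : Type*} [Ring A] (α : A ≃+* A) (u : A) (i : ℕ) : A :=
  (⇑α.symm)^[i] (dElt α u i)

/-- Product of two two-sided ideals. -/
def tsiMul {R : Type*} [Ring R] (I J : TwoSidedIdeal R) : TwoSidedIdeal R :=
  TwoSidedIdeal.span {x | ∃ a ∈ I, ∃ b ∈ J, x = a * b}

/-- The (right-nested) product of a list of two-sided ideals; the empty product is `R`. -/
def tsiListProd {R : Type*} [Ring R] (l : List (TwoSidedIdeal R)) : TwoSidedIdeal R :=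
  l.foldr tsiMul ⊤

/-- A subset of a ring is a right ideal. -/
def IsRightIdealSet {Q : Type*} [Ring Q] (S : Set Q) : Prop :=
  (0 : Q) ∈ S ∧ (∀ a ∈ S, ∀ b ∈ S, a + b ∈ S) ∧ (∀ a ∈ S, -a ∈ S) ∧
    (∀ a ∈ S, ∀ q : Q, a * q ∈ S)

/-- A right ideal is uniform: it is nonzero and any two nonzero elements generate right
ideals with nonzero intersection (equivalently, any two nonzero submodules intersect
nontrivially). -/
def IsUniformRightIdealSet {Q : Type*} [Ring Q] (S : Set Q) : Prop :=
  (∃ a ∈ S, a ≠ 0) ∧ ∀ a ∈ S, a ≠ 0 → ∀ b ∈ S, b ≠ 0 →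
    ∃ q₁ q₂ : Q, a * q₁ = b * q₂ ∧ a * q₁ ≠ 0

/-! ### The universal property of the ambiskew polynomial ring -/

/-- The defining relations of `R(A, α, u − α(u), 1)`, without the freeness condition. -/
structure AmbiskewRel {K A B : Type*} [Field K] [Ring A] [Algebra K A] [Ring B]
    (α : A ≃ₐ[K] A) (u : A) (j : A →+* B) (x y : B) : Prop where
  ya : ∀ a : A, y * j a = j (α a) * y
  xa : ∀ a : A, x * j a = j (α.symm a) * x
  xy : x * y = y * x + j (u - α u)

section Lift

variable {K A B R : Type*} [Field K] [Ring A] [Algebra K A] [Ring B] [Ring R] [Algebra K R]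
  {α : A ≃ₐ[K] A} {u : A}

lemma AmbiskewRel.pow_y {j : A →+* B} {x y : B} (h : AmbiskewRel α u j x y) (i : ℕ) (a : A) :
    y ^ i * j a = j (α^[i] a) * y ^ i := by
  induction i generalizing a with
  | zero => simp
  | succ n ih => rw [pow_succ, mul_assoc, h.ya, ← mul_assoc, ih, mul_assoc,
      Function.iterate_succ_apply]

/-- The commutation rule `x yⁱ⁺¹ = yⁱ⁺¹ x + (u − αⁱ⁺¹(u)) yⁱ`, a telescoping sum. -/
lemma AmbiskewRel.x_pow {j : A →+* B} {x y : B} (h : AmbiskewRel α u j x y) (i : ℕ) :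
    x * y ^ (i + 1) = y ^ (i + 1) * x + j (u - α^[i + 1] u) * y ^ i := by
  induction i with
  | zero => simpa using h.xy
  | succ n ih =>
    have e : y ^ (n + 1) * j (u - α u) = j (α^[n + 1] u - α^[n + 2] u) * y ^ (n + 1) := by
      rw [map_sub, mul_sub, h.pow_y, h.pow_y, ← sub_mul, ← map_sub,
        ← Function.iterate_succ_apply]
    rw [pow_succ y (n + 1), ← mul_assoc, ih, add_mul, mul_assoc, h.xy, mul_add, e, mul_assoc,
      ← pow_succ, add_assoc, ← add_mul, ← map_add, ← mul_assoc]
    congr 4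
    abel

/-- The relations only involve `u` through `u − α(u)`. -/
lemma AmbiskewRel.congr {v : A} {j : A →+* B} {x y : B} (h : AmbiskewRel α v j x y)
    (huv : u - α u = v - α v) : AmbiskewRel α u j x y :=
  ⟨h.ya, h.xa, by rw [huv]; exact h.xy⟩

lemma IsAmbiskew.rel {ι : A →ₐ[K] R} {x y : R} (hR : IsAmbiskew α u ι x y) :
    AmbiskewRel α u (ι : A →+* R) x y := ⟨hR.ya, hR.xa, hR.xy⟩

lemma IsAmbiskew.induction {ι : A →ₐ[K] R} {x y : R} (hR : IsAmbiskew α u ι x y)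
    {P : R → Prop} (h0 : P 0) (hadd : ∀ r s, P r → P s → P (r + s))
    (hb : ∀ a i j, P (ι a * (y ^ i * x ^ j))) (r : R) : P r := by
  obtain ⟨f, rfl⟩ := hR.free.2 r
  exact Finset.sum_induction _ P (fun r s => hadd r s) h0 (fun p _ => hb _ _ _)

/-- The additive map out of the free left module on the monomials `yⁱxʲ`. -/
def monSum (j : A →+* B) (x y : B) : (ℕ × ℕ →₀ A) →+ B :=
  Finsupp.liftAddHom fun p => (AddMonoidHom.mulRight (y ^ p.1 * x ^ p.2)).comp j.toAddMonoidHom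

lemma monSum_single (j : A →+* B) (x y : B) (p : ℕ × ℕ) (a : A) :
    monSum j x y (Finsupp.single p a) = j a * (y ^ p.1 * x ^ p.2) := by
  simp [monSum]

/-- Universal property: any solution of the defining relations in a ring `B` is the image
of `(x, y)` under a ring homomorphism `R → B`. -/
theorem IsAmbiskew.exists_lift {ι : A →ₐ[K] R} {x y : R} (hR : IsAmbiskew α u ι x y)
    {j : A →+* B} {X Y : B} (h : AmbiskewRel α u j X Y) :
    ∃ φ : R →+* B, (∀ a, φ (ι a) = j a) ∧ φ x = X ∧ φ y = Y := by
  have hbij : Function.Bijective (monSum (ι : A →+* R) x y) := hR.free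
  let e := AddEquiv.ofBijective _ hbij
  let φ : R →+ B := (monSum j X Y).comp e.symm.toAddMonoidHom
  have hφ : ∀ a i k, φ (ι a * (y ^ i * x ^ k)) = j a * (Y ^ i * X ^ k) := by
    intro a i k
    have : e.symm (ι a * (y ^ i * x ^ k)) = Finsupp.single (i, k) a := by
      rw [AddEquiv.symm_apply_eq]
      exact (monSum_single (ι : A →+* R) x y (i, k) a).symm
    change monSum j X Y (e.symm _) = _
    rw [this, monSum_single]
  have hι : ∀ a, φ (ι a) = j a := fun a => by simpa using hφ a 0 0
  have hx : φ x = X := by simpa using hφ 1 0 1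
  have hy : φ y = Y := by simpa using hφ 1 1 0
  -- It suffices to test multiplicativity with a generator on the left and a basis element
  -- on the right.
  have main : ∀ r s, φ (r * s) = φ r * φ s := by
    have ext : ∀ r, (∀ a i k, φ (r * (ι a * (y ^ i * x ^ k))) =
        φ r * φ (ι a * (y ^ i * x ^ k))) → ∀ s, φ (r * s) = φ r * φ s := by
      intro r hr s
      refine hR.induction (P := fun s => φ (r * s) = φ r * φ s) (by simp) ?_ hr s
      intro s t hs ht
      rw [mul_add, map_add, hs, ht, map_add, mul_add]
    have mι : ∀ a s, φ (ι a * s) = φ (ι a) * φ s := fun a => ext _ fun b i k => by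
      rw [← mul_assoc, ← map_mul, hφ, hφ, hι, map_mul, mul_assoc]
    have my : ∀ s, φ (y * s) = φ y * φ s := ext _ fun b i k => by
      have e1 : y * (ι b * (y ^ i * x ^ k)) = ι (α b) * (y ^ (i + 1) * x ^ k) := by
        rw [← mul_assoc, hR.ya, pow_succ']; simp only [mul_assoc]
      rw [e1, hφ, hφ, hy, ← mul_assoc Y, h.ya, pow_succ']; simp only [mul_assoc]
    have mx : ∀ s, φ (x * s) = φ x * φ s := ext _ fun b i k => by
      rw [hφ, hx, ← mul_assoc x, hR.xa, ← mul_assoc X, h.xa, mul_assoc, mul_assoc,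
        ← mul_assoc x, ← mul_assoc X]
      cases i with
      | zero => simpa [← pow_succ'] using hφ (α.symm b) 0 (k + 1)
      | succ i =>
        have e1 := hR.rel.x_pow i
        rw [e1, h.x_pow i]
        have e2 := hφ (α.symm b) (i + 1) (k + 1)
        have e3 := hφ (α.symm b * (u - α^[i + 1] u)) i k
        rw [map_mul ι, map_mul j] at e3
        simp only [add_mul, mul_add, map_add, mul_assoc, pow_succ' x k, pow_succ' X k,
          RingHom.coe_coe] at e2 e3 ⊢
        rw [e2, e3]
    have mypow : ∀ i s, φ (y ^ i * s) = φ (y ^ i) * φ s := by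
      intro i
      induction i with
      | zero => intro s; simpa using mι 1 s
      | succ n ih => intro s; rw [pow_succ', mul_assoc, my, ih, my, mul_assoc]
    have mxpow : ∀ i s, φ (x ^ i * s) = φ (x ^ i) * φ s := by
      intro i
      induction i with
      | zero => intro s; simpa using mι 1 s
      | succ n ih => intro s; rw [pow_succ', mul_assoc, mx, ih, mx, mul_assoc]
    intro r s
    refine hR.induction (P := fun r => φ (r * s) = φ r * φ s) (by simp) ?_ ?_ r
    · intro r t hr ht
      rw [add_mul, map_add, hr, ht, map_add, add_mul]
    · intro a i k
      rw [mul_assoc, mι, mul_assoc, mypow, mxpow, mι, mypow]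
      simp only [mul_assoc]
  refine ⟨{ φ with map_one' := by simpa using hι 1, map_mul' := main, map_zero' := map_zero φ },
    hι, hx, hy⟩

end Lift

/-! ### A module annihilated by `y ^ m` -/

section Rep

variable {K A Q : Type*} [Field K] [Ring A] [Algebra K A] [AddCommGroup Q] [Module A Q]

lemma end_mul_apply {V : Type*} [AddCommMonoid V] (f g : AddMonoid.End V) (w : V) :
    (f * g) w = f (g w) := rfl

lemma iterate_central (α : A ≃ₐ[K] A) {v : A} (hv : ∀ a, v * a = a * v) (k : ℕ) (b : A) :
    α^[k] v * b = b * α^[k] v := by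
  obtain ⟨c, rfl⟩ := (α.surjective.iterate k) b
  rw [← iterate_map_mul, hv, iterate_map_mul]

/-- The action of `A` on `Q ^ m` in which `a` acts on the `k`-th coordinate as `αᵏ(a)`. -/
def repA (α : A ≃ₐ[K] A) (Q : Type*) [AddCommGroup Q] [Module A Q] (m : ℕ) :
    A →+* AddMonoid.End (Fin m → Q) where
  toFun a :=
    { toFun := fun f k => α^[k] a • f k
      map_zero' := by ext; simp
      map_add' := by intros; ext; simp }
  map_one' := by
    ext f k
    change α^[k] 1 • f k = f k
    rw [iterate_map_one, one_smul]
  map_zero' := by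
    ext f k
    change α^[k] 0 • f k = 0
    rw [iterate_map_zero, zero_smul]
  map_mul' a b := by
    ext f k
    change α^[k] (a * b) • f k = α^[k] a • α^[k] b • f k
    rw [iterate_map_mul, mul_smul]
  map_add' a b := by
    ext f k
    change α^[k] (a + b) • f k = α^[k] a • f k + α^[k] b • f k
    rw [iterate_map_add, add_smul]

/-- The action of `y` on `Q ^ m`: the shift lowering the coordinate index. -/
def repY (Q : Type*) [AddCommGroup Q] (m : ℕ) : AddMonoid.End (Fin m → Q) where
  toFun f k := if h : k.1 + 1 < m then f ⟨k.1 + 1, h⟩ else 0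
  map_zero' := by ext; simp
  map_add' f g := by ext k; by_cases h : k.1 + 1 < m <;> simp [h]

/-- The action of `x` on `Q ^ m`: the shift raising the coordinate index, weighted by `αᵏ(v)`
in the `k`-th coordinate. -/
def repX (α : A ≃ₐ[K] A) (v : A) (Q : Type*) [AddCommGroup Q] [Module A Q] (m : ℕ) :
    AddMonoid.End (Fin m → Q) where
  toFun f k := if 0 < k.1 then α^[k] v • f ⟨k.1 - 1, by omega⟩ else 0
  map_zero' := by ext; simp
  map_add' f g := by ext k; by_cases h : 0 < k.1 <;> simp [h]

lemma repA_apply (α : A ≃ₐ[K] A) (m : ℕ) (a : A) (f : Fin m → Q) (k : Fin m) :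
    repA α Q m a f k = α^[k] a • f k := rfl

lemma repY_apply (m : ℕ) (f : Fin m → Q) (k : Fin m) :
    repY Q m f k = if h : k.1 + 1 < m then f ⟨k.1 + 1, h⟩ else 0 := rfl

lemma repX_apply (α : A ≃ₐ[K] A) (v : A) (m : ℕ) (f : Fin m → Q) (k : Fin m) :
    repX α v Q m f k = if 0 < k.1 then α^[k] v • f ⟨k.1 - 1, by omega⟩ else 0 := rfl

lemma repX_mul_repY (α : A ≃ₐ[K] A) (v : A) (m : ℕ) (hv : ∀ q : Q, v • q = 0) :
    repX α v Q m * repY Q m = repA α Q m v := by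
  ext f k
  rw [end_mul_apply, repX_apply, repA_apply, repY_apply]
  obtain ⟨k, hk⟩ := k
  rcases k with _ | k
  · simp [hv]
  · simp [hk]

lemma repY_mul_repX (α : A ≃ₐ[K] A) (v : A) (m : ℕ) (hv : ∀ q : Q, α^[m] v • q = 0) :
    repY Q m * repX α v Q m = repA α Q m (α v) := by
  ext f k
  rw [end_mul_apply, repA_apply, repY_apply]
  obtain ⟨k, hk⟩ := k
  by_cases h : k + 1 < m
  · simp [h, repX_apply]
  · obtain rfl : m = k + 1 := by omega
    rw [← Function.iterate_succ_apply, hv]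
    simp

/-- If `v` and `αᵐ(v)` kill `Q`, the two ends of the ladder `Q ^ m` match up and the defining
relations of the ambiskew polynomial ring hold. -/
lemma rep_rel (α : A ≃ₐ[K] A) (v : A) (hvc : ∀ a, v * a = a * v) (m : ℕ)
    (hv : ∀ q : Q, v • q = 0) (hv' : ∀ q : Q, α^[m] v • q = 0) :
    AmbiskewRel α v (repA α Q m) (repX α v Q m) (repY Q m) where
  ya a := by
    ext f k
    simp only [end_mul_apply, repA_apply, repY_apply]
    split_ifs <;> simp
  xa a := by
    ext f k
    simp only [end_mul_apply, repA_apply, repX_apply]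
    obtain ⟨k, hk⟩ := k
    rcases k with _ | k
    · simp
    · have hc := iterate_central α hvc (k + 1)
      have e : α^[k] a = α^[k + 1] (α.symm a) := by
        rw [Function.iterate_succ_apply, α.apply_symm_apply]
      simp only [Nat.zero_lt_succ, if_true, Nat.add_sub_cancel, smul_smul]
      rw [e, hc]
  xy := by
    rw [repX_mul_repY α v m hv, repY_mul_repX α v m hv', map_sub]
    abel

lemma repY_pow (m : ℕ) : repY Q m ^ m = 0 := by
  have key : ∀ i (f : Fin m → Q) (k : Fin m), m ≤ k.1 + i → (repY Q m ^ i) f k = 0 := by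
    intro i
    induction i with
    | zero => intro f k hk; have := k.2; omega
    | succ n ih =>
      intro f k hk
      rw [pow_succ', end_mul_apply, repY_apply]
      split_ifs with h
      · exact ih _ _ (by simp; omega)
      · rfl
  ext f k
  exact key m f k (by omega)

end Rep

/-! ### The quotient by the Casimir ideal inside the skew Laurent ring -/

section Laurent

variable {K A R S : Type*} [Field K] [Ring A] [Algebra K A] [Ring R] [Algebra K R] [Ring S]
  [Algebra K S] {α : A ≃ₐ[K] A} {ιS : A →ₐ[K] S} {Y : Sˣ}

lemma IsSkewLaurent.induction (hS : IsSkewLaurent α ιS Y) {P : S → Prop} (h0 : P 0)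
    (hadd : ∀ r s, P r → P s → P (r + s)) (hb : ∀ a (i : ℤ), P (ιS a * ((Y ^ i : Sˣ) : S)))
    (r : S) : P r := by
  obtain ⟨f, rfl⟩ := hS.free.2 r
  exact Finset.sum_induction _ P (fun r s => hadd r s) h0 (fun p _ => hb _ _)

lemma IsSkewLaurent.inv_comm (hS : IsSkewLaurent α ιS Y) (a : A) :
    ((Y⁻¹ : Sˣ) : S) * ιS a = ιS (α.symm a) * ((Y⁻¹ : Sˣ) : S) := by
  rw [Units.inv_mul_eq_iff_eq_mul, ← mul_assoc, hS.comm, α.apply_symm_apply, mul_assoc,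
    Units.mul_inv, mul_one]

/-- The elements `v Y⁻¹` and `Y` of `A[Y^{±1}; α]` satisfy the ambiskew relations. -/
lemma IsSkewLaurent.rel (hS : IsSkewLaurent α ιS Y) {v : A} (hv : ∀ a, v * a = a * v) :
    AmbiskewRel α v (ιS : A →+* S) (ιS v * ((Y⁻¹ : Sˣ) : S)) Y where
  ya := hS.comm
  xa a := by
    simp only [RingHom.coe_coe]
    rw [mul_assoc, hS.inv_comm, ← mul_assoc, ← mul_assoc, ← map_mul, ← map_mul, hv]
  xy := by
    simp only [RingHom.coe_coe]
    rw [mul_assoc, Units.inv_mul, ← mul_assoc, hS.comm, mul_assoc, Units.mul_inv, map_sub]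
    simp

/-- `X = v Y⁻¹` and `Y` have monomials which are multiples of powers of `Y`, with nonzero
coefficient when `v ≠ 0`. -/
lemma IsSkewLaurent.gwaMon_eq [IsDomain A] (hS : IsSkewLaurent α ιS Y) {v : A} (hv0 : v ≠ 0)
    (k : ℤ) :
    ∃ d : A, d ≠ 0 ∧ gwaMon (ιS v * ((Y⁻¹ : Sˣ) : S)) (Y : S) k = ιS d * ((Y ^ k : Sˣ) : S) := by
  unfold gwaMon
  split_ifs with hk
  · refine ⟨1, one_ne_zero, ?_⟩
    lift k to ℕ using hk
    simp
  · obtain ⟨n, rfl⟩ : ∃ n : ℕ, k = -n := ⟨k.natAbs, by omega⟩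
    clear hk
    simp only [neg_neg, Int.toNat_natCast]
    induction n with
    | zero => exact ⟨1, one_ne_zero, by simp⟩
    | succ n ih =>
      obtain ⟨d, hd, e⟩ := ih
      refine ⟨v * α.symm d, mul_ne_zero hv0 (by simpa using hd), ?_⟩
      have e2 : (Y ^ (-((n + 1 : ℕ) : ℤ)) : Sˣ) = Y⁻¹ * Y ^ (-(n : ℤ)) := by
        rw [← zpow_neg_one, ← zpow_add]; congr 1; push_cast; ring
      rw [pow_succ', e, e2, mul_assoc, ← mul_assoc _ (ιS d), hS.inv_comm, map_mul, Units.val_mul]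
      simp only [mul_assoc]

lemma IsSkewLaurent.coeff_eq_zero (hS : IsSkewLaurent α ιS Y) (f : ℤ →₀ A)
    (hf : f.sum (fun i a => ιS a * ((Y ^ i : Sˣ) : S)) = 0) : f = 0 :=
  hS.free.1 (by simpa using hf)

variable {v u : A} {ι : A →ₐ[K] R} {x y : R} {M : TwoSidedIdeal R}

/-- Modulo the relation `yx ≡ α(v)`, every `yⁱxʲ` reduces to a multiple of a pure power of `x`
or `y`, so the monomials of the generalized Weyl algebra span. -/
lemma IsAmbiskew.span_gwaMon (hR : IsAmbiskew α u ι x y) (hyx : y * x - ι (α v) ∈ M) (r : R) :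
    ∃ f : ℤ →₀ A, r - f.sum (fun k a => ι a * gwaMon x y k) ∈ M := by
  have mono : ∀ i j : ℕ, ∃ (c : A) (k : ℤ), y ^ i * x ^ j - ι c * gwaMon x y k ∈ M := by
    intro i
    induction i with
    | zero =>
      intro j
      refine ⟨1, -j, ?_⟩
      have : gwaMon x y (-(j : ℤ)) = x ^ j := by
        unfold gwaMon
        split_ifs with h
        · obtain rfl : j = 0 := by omega
          simp
        · simp
      simp [this, M.zero_mem]
    | succ i ih =>
      intro j
      cases j with
      | zero => exact ⟨1, ((i + 1 : ℕ) : ℤ), by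
          have : gwaMon x y ((i + 1 : ℕ) : ℤ) = y ^ (i + 1) := by
            unfold gwaMon
            rw [if_pos (by omega), Int.toNat_natCast]
          rw [this]; simp [M.zero_mem]⟩
      | succ j =>
        obtain ⟨c, k, h⟩ := ih j
        refine ⟨α^[i] (α v) * c, k, ?_⟩
        have h1 := M.mul_mem_left (ι (α^[i] (α v))) _ h
        have h2 := M.mul_mem_right _ (x ^ j) (M.mul_mem_left (y ^ i) _ hyx)
        have h3 : y ^ i * ι (α v) = ι (α^[i] (α v)) * y ^ i := hR.rel.pow_y i (α v)
        have h4 := M.add_mem h2 h1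
        rw [mul_sub, h3] at h4
        convert h4 using 1
        rw [pow_succ y, pow_succ' x, map_mul]
        noncomm_ring
  refine hR.induction (P := fun r => ∃ f : ℤ →₀ A,
    r - f.sum (fun k a => ι a * gwaMon x y k) ∈ M) ⟨0, by simp [M.zero_mem]⟩ ?_ ?_ r
  · rintro r s ⟨f, hf⟩ ⟨g, hg⟩
    refine ⟨f + g, ?_⟩
    rw [Finsupp.sum_add_index' (by simp) (by simp [add_mul])]
    convert M.add_mem hf hg using 1
    abel
  · intro a i j
    obtain ⟨c, k, h⟩ := mono i j
    refine ⟨Finsupp.single k (a * c), ?_⟩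
    rw [Finsupp.sum_single_index (by simp), map_mul, mul_assoc, ← mul_sub]
    exact M.mul_mem_left _ _ h

/-- If `v ≠ 0`, the map `R → A[Y^{±1}; α]` given by `x ↦ v Y⁻¹`, `y ↦ Y` has kernel contained
in any ideal modulo which `yx ≡ α(v)`, provided it kills that ideal. -/
lemma mem_of_map_eq_zero [IsDomain A] (hR : IsAmbiskew α u ι x y) (hS : IsSkewLaurent α ιS Y)
    (hv0 : v ≠ 0) (hyx : y * x - ι (α v) ∈ M) (φ : R →+* S) (hι : ∀ a, φ (ι a) = ιS a)
    (hx : φ x = ιS v * ((Y⁻¹ : Sˣ) : S)) (hy : φ y = Y) (hM : ∀ r ∈ M, φ r = 0)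
    {r : R} (hr : φ r = 0) : r ∈ M := by
  obtain ⟨f, hf⟩ := hR.span_gwaMon hyx r
  choose d hd0 hd using hS.gwaMon_eq hv0
  have hmon : ∀ k, φ (gwaMon x y k) = ιS (d k) * ((Y ^ k : Sˣ) : S) := by
    intro k
    rw [← hd k, gwaMon, gwaMon]
    split_ifs <;> simp [hx, hy]
  have h := hM _ hf
  rw [map_sub, hr, zero_sub, neg_eq_zero, Finsupp.sum, map_sum] at h
  let g : ℤ →₀ A := Finsupp.onFinset f.support (fun k => f k * d k) (by
    intro k hk
    rw [Finsupp.mem_support_iff]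
    exact left_ne_zero_of_mul hk)
  have hg : g = 0 := by
    apply hS.coeff_eq_zero
    rw [Finsupp.sum_of_support_subset _ Finsupp.support_onFinset_subset _ (by simp), ← h]
    refine Finset.sum_congr rfl fun k _ => ?_
    rw [map_mul, hι, hmon, ← mul_assoc, ← map_mul]
    rfl
  have hf0 : f = 0 := by
    ext k
    have : f k * d k = 0 := DFunLike.congr_fun hg k
    simpa [hd0 k] using this
  simpa [hf0] using hf

/-- For an ideal `T` of `R`, the union of the sets `Y⁻ⁱ φ(T) Y⁻ʲ`. -/
def laurentSet (Y : Sˣ) (φ : R →+* S) (T : TwoSidedIdeal R) : Set S :=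
  {s | ∃ i j : ℕ, ∃ t ∈ T, φ t = (Y : S) ^ i * s * (Y : S) ^ j}

lemma laurentSet_add {φ : R →+* S} (hy : φ y = Y) {T : TwoSidedIdeal R} {s s' : S}
    (hs : s ∈ laurentSet Y φ T) (hs' : s' ∈ laurentSet Y φ T) : s + s' ∈ laurentSet Y φ T := by
  obtain ⟨i, j, t, ht, e⟩ := hs
  obtain ⟨i', j', t', ht', e'⟩ := hs'
  refine ⟨i + i', j + j', y ^ i' * t * y ^ j' + y ^ i * t' * y ^ j,
    T.add_mem (T.mul_mem_right _ _ (T.mul_mem_left _ _ ht))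
      (T.mul_mem_right _ _ (T.mul_mem_left _ _ ht')), ?_⟩
  simp only [map_add, map_mul, map_pow, hy, e, e']
  rw [mul_add, add_mul, pow_add, pow_add]
  congr 1
  · rw [← pow_add, add_comm, pow_add]; simp only [mul_assoc]
  · rw [← pow_add (Y : S) j, add_comm j, pow_add]; simp only [mul_assoc]

lemma laurentSet_zero {φ : R →+* S} {T : TwoSidedIdeal R} : (0 : S) ∈ laurentSet Y φ T :=
  ⟨0, 0, 0, T.zero_mem, by simp⟩

lemma IsSkewLaurent.pow_comm (hS : IsSkewLaurent α ιS Y) (i : ℕ) (a : A) :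
    (Y : S) ^ i * ιS a = ιS (α^[i] a) * (Y : S) ^ i := by
  induction i generalizing a with
  | zero => simp
  | succ n ih => rw [pow_succ, mul_assoc, hS.comm, ← mul_assoc, ih, mul_assoc,
      Function.iterate_succ_apply]

lemma laurentSet_mul_left (hS : IsSkewLaurent α ιS Y) {φ : R →+* S}
    (hι : ∀ a, φ (ι a) = ιS a) (hy : φ y = Y) {T : TwoSidedIdeal R} (r : S) {s : S}
    (hs : s ∈ laurentSet Y φ T) : r * s ∈ laurentSet Y φ T := by
  refine hS.induction (P := fun r => r * s ∈ laurentSet Y φ T)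
    (by simpa using laurentSet_zero) ?_ ?_ r
  · intro r r' h h'
    rw [add_mul]
    exact laurentSet_add hy h h'
  · intro a k
    obtain ⟨i, j, t, ht, e⟩ := hs
    -- `|k| + k` is a natural number, so multiplying by `Y^(i + |k|)` clears all negative powers.
    obtain ⟨n, hn⟩ : ∃ n : ℕ, (n : ℤ) = k.natAbs + k := ⟨(k.natAbs + k).toNat, by omega⟩
    refine ⟨i + k.natAbs, j, ι (α^[i + k.natAbs] a) * y ^ n * t, T.mul_mem_left _ _ ht, ?_⟩
    have e1 : (Y : S) ^ (i + k.natAbs) * ((Y ^ k : Sˣ) : S) = (Y : S) ^ n * (Y : S) ^ i := by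
      simp only [← Units.val_pow_eq_pow_val, ← Units.val_mul, ← zpow_natCast, ← zpow_add]
      congr 2
      rw [Nat.cast_add]
      omega
    calc φ (ι (α^[i + k.natAbs] a) * y ^ n * t)
        = ιS (α^[i + k.natAbs] a) * ((Y : S) ^ n * (Y : S) ^ i) * s * (Y : S) ^ j := by
          rw [map_mul, map_mul, hι, map_pow, hy, e]; simp only [mul_assoc]
      _ = _ := by
          rw [← e1, ← mul_assoc, ← hS.pow_comm]; simp only [mul_assoc]

lemma laurentSet_mul_right (hS : IsSkewLaurent α ιS Y) {φ : R →+* S}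
    (hι : ∀ a, φ (ι a) = ιS a) (hy : φ y = Y) {T : TwoSidedIdeal R} (r : S) {s : S}
    (hs : s ∈ laurentSet Y φ T) : s * r ∈ laurentSet Y φ T := by
  refine hS.induction (P := fun r => s * r ∈ laurentSet Y φ T)
    (by simpa using laurentSet_zero) ?_ ?_ r
  · intro r r' h h'
    rw [mul_add]
    exact laurentSet_add hy h h'
  · intro a k
    obtain ⟨i, j, t, ht, e⟩ := hs
    obtain ⟨n, hn⟩ : ∃ n : ℕ, (n : ℤ) = k.natAbs + k := ⟨(k.natAbs + k).toNat, by omega⟩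
    obtain ⟨b, rfl⟩ := (α.surjective.iterate j) a
    refine ⟨i, j + k.natAbs, t * (ι b * y ^ n), T.mul_mem_right _ _ ht, ?_⟩
    have e1 : ((Y ^ k : Sˣ) : S) * (Y : S) ^ (j + k.natAbs) = (Y : S) ^ j * (Y : S) ^ n := by
      simp only [← Units.val_pow_eq_pow_val, ← Units.val_mul, ← zpow_natCast, ← zpow_add]
      congr 2
      rw [Nat.cast_add]
      omega
    rw [map_mul, map_mul, hι, map_pow, hy, e]
    calc (Y : S) ^ i * s * (Y : S) ^ j * (ιS b * (Y : S) ^ n)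
        = (Y : S) ^ i * s * ((Y : S) ^ j * ιS b) * (Y : S) ^ n := by simp only [mul_assoc]
      _ = (Y : S) ^ i * s * ιS (α^[j] b) * ((Y : S) ^ j * (Y : S) ^ n) := by
          rw [hS.pow_comm]; simp only [mul_assoc]
      _ = _ := by rw [← e1]; simp only [mul_assoc]

/-- The set `laurentSet` as a two-sided ideal. No Noetherian hypothesis is needed, because
negative powers of `Y` are allowed on both sides. -/
def laurentIdeal (hS : IsSkewLaurent α ιS Y) (φ : R →+* S) (hι : ∀ a, φ (ι a) = ιS a)
    (hy : φ y = Y) (T : TwoSidedIdeal R) : TwoSidedIdeal S :=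
  TwoSidedIdeal.mk' (laurentSet Y φ T) laurentSet_zero (laurentSet_add hy)
    (by
      rintro s ⟨i, j, t, ht, e⟩
      exact ⟨i, j, -t, T.neg_mem ht, by simp [e]⟩)
    (laurentSet_mul_left hS hι hy _) (laurentSet_mul_right hS hι hy _)

/-- When the skew Laurent ring is simple, every ideal of `R` not killed by `φ` has a power of
`Y` in its image. -/
lemma exists_map_eq_pow (hS : IsSkewLaurent α ιS Y) [IsSimpleRing S] (φ : R →+* S)
    (hι : ∀ a, φ (ι a) = ιS a) (hy : φ y = Y) (T : TwoSidedIdeal R) {t : R} (ht : t ∈ T)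
    (h0 : φ t ≠ 0) : ∃ n : ℕ, ∃ t ∈ T, φ t = (Y : S) ^ n := by
  have mem : ∀ s, s ∈ laurentIdeal hS φ hι hy T ↔ s ∈ laurentSet Y φ T :=
    fun s => TwoSidedIdeal.mem_mk' _ _ _ _ _ _ _
  have h1 : (1 : S) ∈ laurentIdeal hS φ hι hy T := by
    rcases eq_bot_or_eq_top (laurentIdeal hS φ hι hy T) with h | h
    · refine absurd ?_ h0
      have : φ t ∈ laurentIdeal hS φ hι hy T := (mem _).2 ⟨0, 0, t, ht, by simp⟩
      rwa [h, TwoSidedIdeal.mem_bot] at this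
    · rw [h]; trivial
  obtain ⟨i, j, t, ht, e⟩ := (mem _).1 h1
  exact ⟨i + j, t, ht, by rw [e, mul_one, pow_add]⟩

/-- If `v` and every `αᵐ(v)`, `m ≥ 1`, are comaximal, an ideal modulo which `xy ≡ v` and
`yx ≡ α(v)` and which contains a power of `y` is the whole ring: from `y^(n+1)` one gets
`x y^(n+1) ≡ v y^n` and `y^(n+1) x ≡ α^(n+1)(v) y^n`. -/
lemma IsAmbiskew.one_mem (hR : IsAmbiskew α u ι x y) (hv : ∀ a, v * a = a * v)
    (hco : ∀ m : ℕ, 1 ≤ m → ∀ a : A, ∃ b c : A, a = v * b + α^[m] v * c)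
    {T : TwoSidedIdeal R} (hxy : x * y - ι v ∈ T) (hyx : y * x - ι (α v) ∈ T) (n : ℕ)
    (hn : y ^ n ∈ T) : (1 : R) ∈ T := by
  induction n with
  | zero => simpa using hn
  | succ n ih =>
    apply ih
    obtain ⟨b, c, e⟩ := hco (n + 1) (by omega) 1
    have h1 : ι v * y ^ n ∈ T := by
      have := T.sub_mem (T.mul_mem_left x _ hn) (T.mul_mem_right _ (y ^ n) hxy)
      convert this using 1
      rw [pow_succ']; noncomm_ring
    have h2 : ι (α^[n + 1] v) * y ^ n ∈ T := by
      have := T.sub_mem (T.mul_mem_right _ x hn) (T.mul_mem_left (y ^ n) _ hyx)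
      convert this using 1
      rw [mul_sub, show y ^ n * ι (α v) = ι (α^[n] (α v)) * y ^ n from hR.rel.pow_y n (α v),
        pow_succ, mul_assoc, Function.iterate_succ_apply]
      abel
    have h3 := T.add_mem (T.mul_mem_left (ι b) _ h1) (T.mul_mem_left (ι c) _ h2)
    rw [hv, iterate_central α hv] at e
    rw [← mul_assoc, ← mul_assoc, ← map_mul, ← map_mul, ← add_mul, ← map_add, ← e] at h3
    simpa using h3

end Laurent

/-- Corollary 3.2: `(z − λ)R` is a maximal two-sided ideal of `R` if and only if
`(u + λ)A + α^m(u + λ)A = A` for all `m ≥ 1`. -/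
theorem stmt7 {K A R S : Type*} [Field K] [IsAlgClosed K]
    [Ring A] [Algebra K A] [IsDomain A] [Ring R] [Algebra K R] [Ring S] [Algebra K S]
    (α : A ≃ₐ[K] A) (u : A) (hu : ∀ a : A, u * a = a * u)
    (ι : A →ₐ[K] R) (x y : R) (hR : IsAmbiskew α u ι x y)
    -- the skew Laurent polynomial ring `A[y^{±1}; α]` is simple with centre `K`
    (ιS : A →ₐ[K] S) (yS : Sˣ) (hS : IsSkewLaurent α ιS yS)
    (hSsimple : IsSimpleRing S)
    (hScentre : ∀ s : S, (∀ w : S, s * w = w * s) → ∃ k : K, s = algebraMap K S k)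
    -- the Casimir element `z = xy − u`
    (z : R) (hz : z = x * y - ι u)
    (lam : K)
    -- the two-sided ideal `(z − λ)R`
    (M : TwoSidedIdeal R)
    (hM : (M : Set R) = {r : R | ∃ s : R, r = (z - algebraMap K R lam) * s}) :
    IsMaximalTwoSided M ↔
      (∀ m : ℕ, 1 ≤ m → ∀ a : A, ∃ b c : A,
        a = (u + algebraMap K A lam) * b + (⇑α)^[m] (u + algebraMap K A lam) * c) := by
  set v : A := u + algebraMap K A lam with hvdef
  have hv : ∀ a, v * a = a * v := fun a => by
    rw [hvdef, add_mul, mul_add, hu, Algebra.commutes]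
  have huv : u - α u = v - α v := by
    rw [hvdef, map_add, AlgEquiv.commutes]; abel
  have hz' : z - algebraMap K R lam = x * y - ι v := by
    rw [hz, hvdef, map_add, AlgHom.commutes]; abel
  rw [hz'] at hM
  have hMmem : ∀ r, r ∈ M ↔ ∃ s, r = (x * y - ι v) * s := fun r => by
    rw [← SetLike.mem_coe, hM]; rfl
  have hxy : x * y - ι v ∈ M := (hMmem _).2 ⟨1, by simp⟩
  have hyx : y * x - ι (α v) ∈ M := by
    convert hxy using 1
    rw [hR.xy, huv, map_sub]; abel
  obtain ⟨φ, hι, hx, hy⟩ := hR.exists_lift ((hS.rel hv).congr huv)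
  have hφM : ∀ r ∈ M, φ r = 0 := by
    intro r hr
    obtain ⟨s, rfl⟩ := (hMmem r).1 hr
    rw [map_mul, map_sub, map_mul, hx, hy, hι, mul_assoc, Units.inv_mul]
    simp
  constructor
  · rintro ⟨-, hmax⟩ m hm a
    -- `Q` is the quotient of `A` by the ideal generated by `v` and `αᵐ(v)`.
    let I : Ideal A := Ideal.span {v, α^[m] v}
    have hIv : ∀ q : A ⧸ I, v • q = 0 := by
      intro q
      obtain ⟨b, rfl⟩ := Submodule.Quotient.mk_surjective I q
      rw [← Submodule.Quotient.mk_smul, Submodule.Quotient.mk_eq_zero, smul_eq_mul, hv]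
      exact I.mul_mem_left _ (Ideal.subset_span (by simp))
    have hIv' : ∀ q : A ⧸ I, α^[m] v • q = 0 := by
      intro q
      obtain ⟨b, rfl⟩ := Submodule.Quotient.mk_surjective I q
      rw [← Submodule.Quotient.mk_smul, Submodule.Quotient.mk_eq_zero, smul_eq_mul,
        iterate_central α hv]
      exact I.mul_mem_left _ (Ideal.subset_span (by simp))
    obtain ⟨ρ, rι, rx, ry⟩ := hR.exists_lift ((rep_rel α v hv m hIv hIv').congr huv)
    have hMT : M < TwoSidedIdeal.ker ρ := by
      refine lt_of_le_of_ne ?_ ?_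
      · intro r hr
        obtain ⟨s, rfl⟩ := (hMmem r).1 hr
        rw [TwoSidedIdeal.mem_ker, map_mul, map_sub, map_mul, rx, ry, rι,
          repX_mul_repY α v m hIv, sub_self, zero_mul]
      · intro h
        have h1 : y ^ m ∈ M := by
          rw [h, TwoSidedIdeal.mem_ker, map_pow, ry, repY_pow]
        have h2 := hφM _ h1
        rw [map_pow, hy] at h2
        exact (yS.isUnit.pow m).ne_zero h2
    have h1 : (1 : R) ∈ TwoSidedIdeal.ker ρ := by rw [hmax _ hMT]; trivial
    rw [TwoSidedIdeal.mem_ker, map_one] at h1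
    have h2 : (Submodule.Quotient.mk a : A ⧸ I) = 0 := by
      have := DFunLike.congr_fun h1 (fun _ : Fin m => (Submodule.Quotient.mk a : A ⧸ I))
      exact congrFun this ⟨0, hm⟩
    rw [Submodule.Quotient.mk_eq_zero, Ideal.mem_span_pair] at h2
    obtain ⟨b, c, e⟩ := h2
    exact ⟨b, c, by rw [hv, iterate_central α hv, e]⟩
  · intro hco
    have hv0 : v ≠ 0 := by
      intro h
      obtain ⟨b, c, e⟩ := hco 1 le_rfl 1
      simp [h] at e
    refine ⟨?_, fun T hT => ?_⟩
    · intro h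
      have := hφM 1 (by rw [h]; trivial)
      rw [map_one] at this
      exact one_ne_zero this
    · obtain ⟨hle, t, ht, htM⟩ := SetLike.lt_iff_le_and_exists.1 hT
      have hker : ∀ {r}, φ r = 0 → r ∈ M :=
        fun hr => mem_of_map_eq_zero hR hS hv0 hyx φ hι hx hy hφM hr
      obtain ⟨n, s, hs, e⟩ := exists_map_eq_pow hS φ hι hy T ht (fun h => htM (hker h))
      have hyn : y ^ n ∈ T := by
        have := T.add_mem (hle (hker (r := y ^ n - s) (by simp [hy, e]))) hs
        simpa using this
      have h1 := hR.one_mem hv hco (hle hxy) (hle hyx) n hyn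
      exact TwoSidedIdeal.one_mem_iff _ |>.1 h1
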